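/- Let n ≡ s (mod 4) be a positive integer with s ∈ {1, −1}. Then, modulo Φ_n(−q)^3 Φ_n(q)^2, one has Σ_{k=0}^{(n−s)/4} (−1)^k · (1+q^{8k+s})(q^{2s};q^8)_k^3 / ((1+q^s)(q^8;q^8)_k^3) · q^{4k^2+2k(4−s)} ≡ (−1)^{(n−s)/4} · ([n]_{q^2}/[s]_{q^2}) · q^{(n−s)(n+s−4)/4} · Σ_{k=0}^{(n−s)/4} (q^{2s};q^8)_k^2 (q^4;q^8)_k / ((q^8, q^{4+s}, q^{8+s}; q^8)_k) · q^{2k(4−s)}. -/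

import Mathlib

open Finset Polynomial

/-- The q-shifted factorial `(x; q)_k = ∏_{j=0}^{k-1} (1 - x q^j)`. -/
noncomputable def qPoch (x q : RatFunc ℚ) (k : ℕ) : RatFunc ℚ :=
  ∏ j ∈ Finset.range k, (1 - x * q ^ j)

/-- The q-integer `[m]_q = (1 - q^m)/(1 - q)` (with integer `m`). -/
noncomputable def qInt (q : RatFunc ℚ) (m : ℤ) : RatFunc ℚ :=
  (1 - q ^ m) / (1 - q)

/-!
Put `p = q ^ 4`, `b = q ^ s`, `N = (n - s) / 4` and `w = p ^ N * b = q ^ n`. In both sums replace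
two of the factors `(x; p ^ 2)_k` by `(c x; p ^ 2)_k (x / c; p ^ 2)_k`, which depends on `c` only
through `u = c + c⁻¹`. After clearing denominators the difference of the two sides is a polynomial
in `u` with two known divisors. Modulo `1 + w` the terms `k` and `N - k` on the left cancel and the
right-hand side has `1 + w` as a factor. At `c = w ^ 2` one of the new factors terminates the sums
naturally, and the Bailey lemma shows that the two sides agree, so `u - (w ^ 2 + w ^ (-2))` divides
as well. At `u = 2` the second divisor is `-(1 - w ^ 2) ^ 2 / w ^ 2`, so the difference is divisible
by `(1 + q ^ n) ^ 3 * (1 - q ^ n) ^ 2`, while the cleared denominators are units modulo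
`Φ_n(-q) ^ 3 * Φ_n(q) ^ 2`.
-/

section QPochhammer

variable {R S K : Type*} [CommRing R] [CommRing S] [Field K]

/-- The `q`-shifted factorial `(x; Q)_k` over an arbitrary commutative ring. -/
def qPochhammer (x Q : R) (k : ℕ) : R := ∏ j ∈ range k, (1 - x * Q ^ j)

/-- The product `(cx; Q)_k (x/c; Q)_k`, written in terms of `u = c + c⁻¹` so that it is a polynomial
in `u`. The parameter `u` is the variable of the creative microscoping argument; `u = 2` is the case
`c = 1`. -/
def symmPochhammer (u x Q : R) (k : ℕ) : R :=
  ∏ j ∈ range k, (1 - u * (x * Q ^ j) + (x * Q ^ j) ^ 2)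

@[simp] lemma qPochhammer_zero (x Q : R) : qPochhammer x Q 0 = 1 := prod_range_zero _

lemma qPochhammer_succ (x Q : R) (k : ℕ) :
    qPochhammer x Q (k + 1) = qPochhammer x Q k * (1 - x * Q ^ k) :=
  prod_range_succ _ k

lemma qPochhammer_add (x Q : R) (k l : ℕ) :
    qPochhammer x Q (k + l) = qPochhammer x Q k * qPochhammer (x * Q ^ k) Q l := by
  simp only [qPochhammer, prod_range_add, pow_add, mul_assoc]

lemma qPochhammer_succ' (x Q : R) (k : ℕ) :
    qPochhammer x Q (k + 1) = (1 - x) * qPochhammer (x * Q) Q k := by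
  rw [add_comm, qPochhammer_add, qPochhammer_succ]
  simp

lemma qPochhammer_two_mul (x p : R) (k : ℕ) :
    qPochhammer x p (2 * k) = qPochhammer x (p ^ 2) k * qPochhammer (x * p) (p ^ 2) k := by
  induction k with
  | zero => simp
  | succ k ih =>
    simp only [mul_add_one, qPochhammer_succ, ih]
    ring

lemma qPochhammer_ne_zero {x Q : K} (h : ∀ j, x * Q ^ j ≠ 1) (k : ℕ) : qPochhammer x Q k ≠ 0 :=
  prod_ne_zero_iff.2 fun j _ => sub_ne_zero.2 (h j).symm

@[simp] lemma map_qPochhammer (f : R →+* S) (x Q : R) (k : ℕ) :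
    f (qPochhammer x Q k) = qPochhammer (f x) (f Q) k := by
  simp [qPochhammer]

lemma symmPochhammer_add (u x Q : R) (k l : ℕ) :
    symmPochhammer u x Q (k + l) = symmPochhammer u x Q k * symmPochhammer u (x * Q ^ k) Q l := by
  simp only [symmPochhammer, prod_range_add, pow_add, mul_assoc]

lemma symmPochhammer_two (x Q : R) (k : ℕ) : symmPochhammer 2 x Q k = qPochhammer x Q k ^ 2 := by
  rw [symmPochhammer, qPochhammer, ← prod_pow]
  exact prod_congr rfl fun _ _ => by ring

lemma symmPochhammer_add_inv {c : K} (hc : c ≠ 0) (x Q : K) (k : ℕ) :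
    symmPochhammer (c + c⁻¹) x Q k = qPochhammer (c * x) Q k * qPochhammer (x / c) Q k := by
  rw [symmPochhammer, qPochhammer, qPochhammer, ← prod_mul_distrib]
  refine prod_congr rfl fun _ _ => ?_
  field_simp
  ring

@[simp] lemma map_symmPochhammer (f : R →+* S) (u x Q : R) (k : ℕ) :
    f (symmPochhammer u x Q k) = symmPochhammer (f u) (f x) (f Q) k := by
  simp [symmPochhammer]

lemma prod_range_mul_pow (x Q : R) (k : ℕ) :
    ∏ j ∈ range k, x * Q ^ j = x ^ k * Q ^ k.choose 2 := by
  rw [prod_mul_distrib, prod_const, card_range, prod_pow_eq_pow_sum, Finset.sum_range_id,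
    Nat.choose_two_right]

lemma mul_pow_mul_mul_pow_eq_one {x y Q : R} {k j : ℕ} (hQ : IsUnit Q) (h : x * y * Q ^ k = Q)
    (hj : j < k) : x * Q ^ j * (y * Q ^ (k - 1 - j)) = 1 := by
  refine hQ.mul_left_cancel ?_
  calc Q * (x * Q ^ j * (y * Q ^ (k - 1 - j)))
      = x * y * (Q ^ (1 + j + (k - 1 - j))) := by ring
    _ = Q * 1 := by rw [show 1 + j + (k - 1 - j) = k by lia, h, mul_one]

lemma qPochhammer_reflect {x y Q : R} {k : ℕ} (hQ : IsUnit Q) (h : x * y * Q ^ k = Q) :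
    qPochhammer x Q k = (-x) ^ k * Q ^ k.choose 2 * qPochhammer y Q k := by
  rw [← prod_range_mul_pow, qPochhammer, qPochhammer, ← prod_range_reflect (fun j => 1 - y * Q ^ j),
    ← prod_mul_distrib]
  refine prod_congr rfl fun j hj => ?_
  linear_combination -mul_pow_mul_mul_pow_eq_one hQ h (mem_range.1 hj)

lemma symmPochhammer_reflect {x y Q : R} {k : ℕ} (u : R) (hQ : IsUnit Q) (h : x * y * Q ^ k = Q) :
    symmPochhammer u x Q k = (x ^ k * Q ^ k.choose 2) ^ 2 * symmPochhammer u y Q k := by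
  rw [← prod_range_mul_pow, symmPochhammer, symmPochhammer,
    ← prod_range_reflect (fun j => 1 - u * (y * Q ^ j) + (y * Q ^ j) ^ 2), ← prod_pow,
    ← prod_mul_distrib]
  refine prod_congr rfl fun j hj => ?_
  have hxy := mul_pow_mul_mul_pow_eq_one hQ h (mem_range.1 hj)
  linear_combination (u * (x * Q ^ j) - x * Q ^ j * (y * Q ^ (k - 1 - j)) - 1) * hxy

end QPochhammer

section QBinomial

variable {R : Type*} [CommRing R]

/-- The Gaussian binomial coefficient, defined by `q`-Pascal recursion so that it makes sense in
every commutative ring and vanishes above the diagonal. -/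
def qChoose (Q : R) : ℕ → ℕ → R
  | _, 0 => 1
  | 0, _ + 1 => 0
  | m + 1, r + 1 => Q ^ (r + 1) * qChoose Q m (r + 1) + qChoose Q m r

@[simp] lemma qChoose_zero_right (Q : R) (m : ℕ) : qChoose Q m 0 = 1 := by cases m <;> rfl

lemma qChoose_succ_succ (Q : R) (m r : ℕ) :
    qChoose Q (m + 1) (r + 1) = Q ^ (r + 1) * qChoose Q m (r + 1) + qChoose Q m r := rfl

lemma qChoose_eq_zero_of_lt (Q : R) {m r : ℕ} (h : m < r) : qChoose Q m r = 0 := by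
  induction m generalizing r with
  | zero => obtain ⟨r, rfl⟩ := Nat.exists_eq_add_one.2 h; rfl
  | succ m ih =>
    obtain ⟨r, rfl⟩ := Nat.exists_eq_add_one.2 (Nat.zero_lt_of_lt h)
    rw [qChoose_succ_succ, ih (by lia), ih (by lia), mul_zero, add_zero]

@[simp] lemma qChoose_self (Q : R) (m : ℕ) : qChoose Q m m = 1 := by
  induction m with
  | zero => rfl
  | succ m ih =>
    rw [qChoose_succ_succ, ih, qChoose_eq_zero_of_lt Q m.lt_succ_self, mul_zero, zero_add]

lemma qChoose_mul_qPochhammer (Q : R) (j e : ℕ) :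
    qChoose Q (j + e) j * (qPochhammer Q Q j * qPochhammer Q Q e) = qPochhammer Q Q (j + e) := by
  induction j generalizing e with
  | zero => simp
  | succ j ihj =>
    induction e with
    | zero => simp
    | succ e ihe =>
      have ihj := ihj (e + 1)
      rw [show j + (e + 1) = j + 1 + e by ring] at ihj
      rw [← add_assoc, qChoose_succ_succ, qPochhammer_succ _ _ (j + 1 + e)]
      rw [qPochhammer_succ _ _ e] at ihj ⊢
      rw [qPochhammer_succ _ _ j] at ihe ⊢
      linear_combination (Q ^ (j + 1) * (1 - Q * Q ^ e)) * ihe + (1 - Q * Q ^ j) * ihj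

lemma qChoose_succ_right_mul (Q : R) (m r : ℕ) :
    Q ^ r * (1 - Q ^ (r + 1)) * qChoose Q m (r + 1) = (Q ^ r - Q ^ m) * qChoose Q m r := by
  induction m generalizing r with
  | zero => cases r <;> simp [qChoose]
  | succ m ih =>
    rcases r with _ | r
    · have := ih 0
      simp only [qChoose_succ_succ, qChoose_zero_right] at this ⊢
      linear_combination Q * this
    · simp only [qChoose_succ_succ]
      linear_combination Q ^ (r + 2) * ih (r + 1) + Q * ih r

/-- Multiplied by `Q ^ r` to avoid the exponent `m - r`. -/
lemma qChoose_succ_succ_sub (Q : R) (m r : ℕ) :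
    Q ^ r * (qChoose Q (m + 1) (r + 1) - qChoose Q m (r + 1)) = Q ^ m * qChoose Q m r := by
  linear_combination Q ^ r * qChoose_succ_succ Q m r - qChoose_succ_right_mul Q m r

lemma qChoose_succ_left_mul (Q : R) (m r : ℕ) :
    Q ^ r * (1 - Q ^ (m + 1)) * qChoose Q m r = (Q ^ r - Q ^ (m + 1)) * qChoose Q (m + 1) r := by
  rcases r with _ | r
  · simp
  · linear_combination (Q ^ (m + 1) - Q ^ (r + 1)) * qChoose_succ_succ Q m r
      + Q * qChoose_succ_right_mul Q m r

lemma sum_qChoose_succ_mul (Q : R) (m : ℕ) (f : ℕ → R) :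
    ∑ j ∈ range (m + 2), qChoose Q (m + 1) j * f j =
      ∑ j ∈ range (m + 1), qChoose Q m j * (Q ^ j * f j + f (j + 1)) := by
  have hshift : ∑ j ∈ range (m + 1), qChoose Q m j * (Q ^ j * f j) =
      ∑ j ∈ range (m + 1), qChoose Q m (j + 1) * (Q ^ (j + 1) * f (j + 1)) + f 0 := by
    have h := sum_range_succ' (fun j => qChoose Q m j * (Q ^ j * f j)) (m + 1)
    rw [sum_range_succ, qChoose_eq_zero_of_lt Q m.lt_succ_self] at h
    simpa using h
  simp only [mul_add, sum_add_distrib]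
  rw [hshift, sum_range_succ', add_right_comm, ← sum_add_distrib, qChoose_zero_right, one_mul]
  congr 1
  exact sum_congr rfl fun j _ => by rw [qChoose_succ_succ]; ring

lemma qChuVandermonde (Q A D : R) (m : ℕ) :
    ∑ j ∈ range (m + 1), qChoose Q m j * ((-D) ^ j * Q ^ j.choose 2 * qPochhammer A Q j *
      qPochhammer (A * D * Q ^ j) Q (m - j)) = qPochhammer D Q m := by
  induction m generalizing D with
  | zero => simp
  | succ m ih =>
    rw [sum_qChoose_succ_mul, qPochhammer_succ', ← ih (D * Q), mul_sum]
    refine sum_congr rfl fun j hj => ?_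
    obtain ⟨e, rfl⟩ := Nat.exists_eq_add_of_le (mem_range_succ_iff.1 hj)
    rw [show j + e + 1 - j = e + 1 by lia, show j + e - j = e by lia,
      show j + e + 1 - (j + 1) = e by lia, qPochhammer_succ', qPochhammer_succ,
      Nat.choose_succ_succ' j 1, Nat.choose_one_right,
      show A * D * Q ^ j * Q = A * (D * Q) * Q ^ j by ring,
      show A * D * Q ^ (j + 1) = A * (D * Q) * Q ^ j by ring, neg_mul_eq_neg_mul, mul_pow]
    ring

end QBinomial

section Bailey

variable {K : Type*} [Field K] {a Q D ρ y z : K}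

/-- Bailey pairs relative to `a`, with base `Q`. -/
def IsBaileyPair (a Q : K) (α β : ℕ → K) : Prop :=
  ∀ k, β k = ∑ r ∈ range (k + 1),
    α r / (qPochhammer Q Q (k - r) * qPochhammer (a * Q) Q (k + r))

lemma qPochhammer_eq_qChoose_mul {m j : ℕ} (hQ0 : Q ≠ 0) (hQ : ∀ i, Q * Q ^ i ≠ 1)
    (hy : y * Q ^ m = 1) (hj : j ≤ m) :
    qPochhammer y Q j = qChoose Q m j * qPochhammer Q Q j * ((-y) ^ j * Q ^ j.choose 2) := by
  obtain ⟨e, rfl⟩ := Nat.exists_eq_add_of_le hj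
  have hreflect := qPochhammer_reflect (x := y) (y := Q * Q ^ e) (k := j) hQ0.isUnit
    (by linear_combination Q * hy)
  have hsplit := qChoose_mul_qPochhammer Q j e
  rw [add_comm j e, qPochhammer_add, add_comm e j] at hsplit
  refine mul_right_cancel₀ (qPochhammer_ne_zero hQ e) ?_
  linear_combination qPochhammer Q Q e * hreflect - (-y) ^ j * Q ^ j.choose 2 * hsplit

lemma sum_qPochhammer_div_shift (hQ0 : Q ≠ 0) (hQ : ∀ i, Q * Q ^ i ≠ 1)
    (ha : ∀ i, a * Q * Q ^ i ≠ 1) (hρ : ρ * D = a * Q) (hyz : y * z = D) (r m : ℕ)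
    (hy : y * Q ^ (r + m) = 1) :
    ∑ j ∈ range (m + 1), qPochhammer ρ Q (r + j) * qPochhammer y Q (r + j) * z ^ (r + j) /
        (qPochhammer Q Q j * qPochhammer (a * Q) Q (r + j + r)) =
      qPochhammer ρ Q r * qPochhammer y Q r * z ^ r * qPochhammer (D * Q ^ r) Q m /
        qPochhammer (a * Q) Q (r + m + r) := by
  subst hyz
  rw [← qChuVandermonde Q (ρ * Q ^ r) (y * z * Q ^ r), mul_sum, sum_div]
  refine sum_congr rfl fun j hj => ?_
  have hjm := mem_range_succ_iff.1 hj
  have hyj := qPochhammer_eq_qChoose_mul (y := y * Q ^ r) hQ0 hQ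
    (by rw [← hy, pow_add, mul_assoc]) hjm
  have hden : qPochhammer (a * Q) Q (r + m + r) = qPochhammer (a * Q) Q (r + j + r) *
      qPochhammer (ρ * Q ^ r * (y * z * Q ^ r) * Q ^ j) Q (m - j) := by
    rw [show r + m + r = r + j + r + (m - j) by lia, qPochhammer_add, ← hρ]
    ring_nf
  have h₀ := qPochhammer_ne_zero hQ j
  have h₁ := qPochhammer_ne_zero ha (r + m + r)
  rw [hden] at h₁ ⊢
  rw [qPochhammer_add ρ, qPochhammer_add y, hyj,
    div_eq_div_iff (mul_ne_zero h₀ (left_ne_zero_of_mul h₁)) h₁]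
  ring

/-- The terminating Bailey lemma, with `y = Q ^ (-N)`. -/
theorem IsBaileyPair.sum_eq {α β : ℕ → K} (h : IsBaileyPair a Q α β) {N : ℕ} (hQ0 : Q ≠ 0)
    (hQ : ∀ i, Q * Q ^ i ≠ 1) (ha : ∀ i, a * Q * Q ^ i ≠ 1) (hD : qPochhammer D Q N ≠ 0)
    (hρ : ρ * D = a * Q) (hyz : y * z = D) (hy : y * Q ^ N = 1) :
    qPochhammer (a * Q) Q N *
        ∑ k ∈ range (N + 1), qPochhammer ρ Q k * qPochhammer y Q k * z ^ k * β k =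
      qPochhammer D Q N * ∑ r ∈ range (N + 1), α r * (qPochhammer ρ Q r * qPochhammer y Q r *
        z ^ r / (qPochhammer D Q r * qPochhammer (a * Q * Q ^ N) Q r)) := by
  simp only [h _, mul_sum]
  rw [sum_comm' (t' := range (N + 1)) (s' := fun r => Ico r (N + 1))
    (fun k r => by simp only [mem_range, mem_Ico]; lia)]
  refine sum_congr rfl fun r hr => ?_
  obtain ⟨m, rfl⟩ := Nat.exists_eq_add_of_le (mem_range_succ_iff.1 hr)
  have hinner := sum_qPochhammer_div_shift hQ0 hQ ha hρ hyz r m hy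
  rw [qPochhammer_add _ _ (r + m)] at hinner
  calc ∑ k ∈ Ico r (r + m + 1), qPochhammer (a * Q) Q (r + m) * (qPochhammer ρ Q k *
        qPochhammer y Q k * z ^ k *
          (α r / (qPochhammer Q Q (k - r) * qPochhammer (a * Q) Q (k + r))))
      = qPochhammer (a * Q) Q (r + m) * α r * ∑ j ∈ range (m + 1), qPochhammer ρ Q (r + j) *
          qPochhammer y Q (r + j) * z ^ (r + j) /
            (qPochhammer Q Q j * qPochhammer (a * Q) Q (r + j + r)) := by
        rw [sum_Ico_eq_sum_range, show r + m + 1 - r = m + 1 by lia, mul_sum]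
        exact sum_congr rfl fun j _ => by rw [Nat.add_sub_cancel_left]; ring
    _ = _ := by
        have h₀ := qPochhammer_ne_zero ha (r + m + r)
        rw [qPochhammer_add _ _ (r + m)] at h₀
        rw [qPochhammer_add] at hD
        rw [hinner, qPochhammer_add D]
        field_simp [left_ne_zero_of_mul h₀, right_ne_zero_of_mul h₀, left_ne_zero_of_mul hD]

end Bailey

section BaileyPair

/-- The nondegeneracy conditions under which all denominators in the two sums are nonzero: `p` is
not a root of unity and no `b * p ^ i` is `±1`. -/
structure IsGeneric {R : Type*} [CommRing R] (p b : R) : Prop where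
  isUnit_left : IsUnit p
  isUnit_right : IsUnit b
  pow_ne_one : ∀ i, 0 < i → p ^ i ≠ 1
  sq_ne_one : ∀ i, (b * p ^ i) ^ 2 ≠ 1

lemma IsGeneric.map {R S : Type*} [CommRing R] [CommRing S] {p b : R} (h : IsGeneric p b)
    (f : R →+* S) (hf : Function.Injective f) : IsGeneric (f p) (f b) where
  isUnit_left := h.isUnit_left.map f
  isUnit_right := h.isUnit_right.map f
  pow_ne_one i hi := by simpa using hf.ne (h.pow_ne_one i hi)
  sq_ne_one i := by simpa using hf.ne (h.sq_ne_one i)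

variable {K : Type*} [Field K] {p b : K}

namespace IsGeneric

lemma one_sub_ne_zero (h : IsGeneric p b) (i : ℕ) : 1 - p ^ i * b ≠ 0 := fun h₀ =>
  h.sq_ne_one i (by linear_combination (-1 - p ^ i * b) * h₀)

lemma one_add_ne_zero (h : IsGeneric p b) (i : ℕ) : 1 + p ^ i * b ≠ 0 := fun h₀ =>
  h.sq_ne_one i (by linear_combination (p ^ i * b - 1) * h₀)

lemma sq_mul_sq_pow_ne_one (h : IsGeneric p b) (i : ℕ) : p ^ 2 * (p ^ 2) ^ i ≠ 1 := by
  have := h.pow_ne_one (2 * (i + 1)) (by lia)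
  rwa [pow_mul, pow_succ'] at this

lemma mul_sq_pow_ne_one (h : IsGeneric p b) (i : ℕ) : b ^ 2 * p ^ 2 * (p ^ 2) ^ i ≠ 1 := by
  convert h.sq_ne_one (i + 1) using 1
  ring

lemma mul_mul_pow_ne_one (h : IsGeneric p b) (i : ℕ) : p * b * p ^ i ≠ 1 := fun h₁ =>
  h.one_sub_ne_zero (i + 1) (by linear_combination -h₁)

end IsGeneric

/-- The `α` member of the Bailey pair relative to `b ^ 2`, base `p ^ 2`, underlying the theorem. -/
def baileyAlpha (p b : K) (r : ℕ) : K :=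
  (-1) ^ r * ((1 + p ^ (2 * r) * b) / (1 + b)) *
    (qPochhammer (b ^ 2) (p ^ 2) r / qPochhammer (p ^ 2) (p ^ 2) r) * p ^ r ^ 2

/-- The `β` member of the Bailey pair relative to `b ^ 2`, base `p ^ 2`, underlying the theorem. -/
def baileyBeta (p b : K) (k : ℕ) : K :=
  qPochhammer p (p ^ 2) k / (qPochhammer (p ^ 2) (p ^ 2) k * qPochhammer (p * b) p (2 * k))

/-- The summand of the Bailey pair identity, cleared of the factors that do not depend on `r`. -/
def baileySummand (p b : K) (m r : ℕ) : K :=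
  (-1) ^ r * (1 + p ^ (2 * r) * b) * qPochhammer (b ^ 2) (p ^ 2) r * p ^ r ^ 2 *
    qChoose (p ^ 2) m r / qPochhammer (b ^ 2 * p ^ 2) (p ^ 2) (m + r)

/-- The companion of `baileySummand` in the `q`-Wilf–Zeilberger method. -/
def baileyCertificate (p b : K) (m r : ℕ) : K :=
  (-1) ^ r * qPochhammer (b ^ 2) (p ^ 2) r * p ^ r ^ 2 * (b * p ^ (2 * r) / p - 1) *
    (qChoose (p ^ 2) (m + 1) r - qChoose (p ^ 2) m r) /
      qPochhammer (b ^ 2 * p ^ 2) (p ^ 2) (m + r)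

lemma baileyCertificate_succ_sub (h : IsGeneric p b) (m r : ℕ) :
    baileyCertificate p b m (r + 1) - baileyCertificate p b m r =
      (1 - p ^ (2 * m + 1) * b) * (1 - p ^ (2 * m + 2) * b) * baileySummand p b (m + 1) r -
        (1 - p ^ (2 * m + 1)) * baileySummand p b m r := by
  have hp := h.isUnit_left.ne_zero
  have hpascal := qChoose_succ_succ_sub (p ^ 2) m r
  have hleft := qChoose_succ_left_mul (p ^ 2) m r
  have h₀ := qPochhammer_ne_zero h.mul_sq_pow_ne_one (m + r + 1)
  unfold baileyCertificate baileySummand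
  rw [add_right_comm m 1 r, ← add_assoc m r 1]
  rw [qPochhammer_succ] at h₀ ⊢
  have hx : p ^ (2 * r) = (p ^ 2) ^ r := pow_mul p 2 r
  have hy : p ^ (2 * m) = (p ^ 2) ^ m := pow_mul p 2 m
  rw [qPochhammer_succ, show p ^ (r + 1) ^ 2 = p ^ r ^ 2 * p * (p ^ 2) ^ r by ring,
    mul_add_one, pow_add _ (2 * r), pow_add _ (2 * m), pow_add _ (2 * m), hx, hy]
  rw [pow_succ _ m] at hleft
  rw [pow_add _ m] at h₀ ⊢
  generalize (p ^ 2) ^ r = x at *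
  generalize (p ^ 2) ^ m = y at *
  generalize hE : 1 - b ^ 2 * p ^ 2 * (y * x) = E at *
  have hE₀ := right_ne_zero_of_mul h₀
  field_simp [left_ne_zero_of_mul h₀]
  subst hE
  linear_combination (-1) ^ r * qPochhammer (b ^ 2) (p ^ 2) r *
    ((b ^ 2 * x - 1) * p ^ 2 * (b * p * x - 1) * hpascal
      + (b * (1 + p) - p ^ 2 * y * b ^ 2 - b ^ 3 * p ^ 2 * x * y) * hleft)

lemma sum_baileySummand (h : IsGeneric p b) (m : ℕ) :
    (∑ r ∈ range (m + 1), baileySummand p b m r) * qPochhammer (p * b) p (2 * m) =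
      (1 + b) * qPochhammer p (p ^ 2) m := by
  induction m with
  | zero => simp [baileySummand]
  | succ m ih =>
    have htelescope : ∑ r ∈ range (m + 2), ((1 - p ^ (2 * m + 1) * b) *
        (1 - p ^ (2 * m + 2) * b) * baileySummand p b (m + 1) r -
          (1 - p ^ (2 * m + 1)) * baileySummand p b m r) = 0 := by
      rw [← sum_congr rfl fun r _ => baileyCertificate_succ_sub h m r, sum_range_sub]
      simp [baileyCertificate, qChoose_eq_zero_of_lt]
    rw [sum_sub_distrib, ← mul_sum, ← mul_sum, sum_range_succ (baileySummand p b m) (m + 1),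
      show baileySummand p b m (m + 1) = 0 by simp [baileySummand, qChoose_eq_zero_of_lt],
      add_zero] at htelescope
    rw [mul_add_one 2 m, qPochhammer_succ, qPochhammer_succ, qPochhammer_succ]
    linear_combination qPochhammer (p * b) p (2 * m) * htelescope + (1 - p ^ (2 * m + 1)) * ih

theorem isBaileyPair_baileyAlpha_baileyBeta (h : IsGeneric p b) :
    IsBaileyPair (b ^ 2) (p ^ 2) (baileyAlpha p b) (baileyBeta p b) := by
  intro k
  have hb : 1 + b ≠ 0 := by simpa using h.one_add_ne_zero 0
  have hQ := qPochhammer_ne_zero h.sq_mul_sq_pow_ne_one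
  have hterm : ∀ r ∈ range (k + 1), baileyAlpha p b r / (qPochhammer (p ^ 2) (p ^ 2) (k - r) *
      qPochhammer (b ^ 2 * p ^ 2) (p ^ 2) (k + r)) =
        baileySummand p b k r / ((1 + b) * qPochhammer (p ^ 2) (p ^ 2) k) := fun r hr => by
    have hchoose := qChoose_mul_qPochhammer (p ^ 2) r (k - r)
    rw [Nat.add_sub_cancel' (mem_range_succ_iff.1 hr)] at hchoose
    have h₀ := hQ k
    rw [← hchoose] at h₀ ⊢
    have h₁ := left_ne_zero_of_mul h₀
    have h₂ := hQ r
    have h₃ := hQ (k - r)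
    have h₄ := qPochhammer_ne_zero h.mul_sq_pow_ne_one (k + r)
    rw [baileyAlpha, baileySummand]
    field_simp
  rw [baileyBeta, sum_congr rfl hterm, ← sum_div,
    div_eq_div_iff (mul_ne_zero (hQ k) (qPochhammer_ne_zero h.mul_mul_pow_ne_one _))
      (mul_ne_zero hb (hQ k))]
  linear_combination -qPochhammer (p ^ 2) (p ^ 2) k * sum_baileySummand h k

end BaileyPair

section ClearedSums

variable {R S : Type*} [CommRing R] [CommRing S]

/-- The summand with index `k` of the left-hand side, with parameter `u` inserted and denominators
cleared, where `m = N - k`. -/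
def wellPoisedTerm (p b u : R) (k m : ℕ) : R :=
  (-1) ^ k * (1 + p ^ (2 * k) * b) * p ^ (k ^ 2 + 2 * k) * b ^ (2 * m) *
    (qPochhammer (b ^ 2) (p ^ 2) k * qPochhammer (p ^ 2 * (p ^ 2) ^ k) (p ^ 2) m) *
    (symmPochhammer u (b ^ 2) (p ^ 2) k * symmPochhammer u (p ^ 2 * (p ^ 2) ^ k) (p ^ 2) m)

/-- The left-hand side, with parameter `u` inserted and denominators cleared. -/
def wellPoisedSum (p b u : R) (N : ℕ) : R :=
  ∑ x ∈ antidiagonal N, wellPoisedTerm p b u x.1 x.2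

/-- The sum on the right-hand side, with parameter `u` inserted and denominators cleared. -/
def balancedSum (p b u : R) (N : ℕ) : R :=
  symmPochhammer u (p ^ 2) (p ^ 2) N * ∑ x ∈ antidiagonal N,
    p ^ (2 * x.1) * b ^ (2 * x.2) * symmPochhammer u (b ^ 2) (p ^ 2) x.1 *
      (qPochhammer p (p ^ 2) x.1 * qPochhammer (p ^ 2 * (p ^ 2) ^ x.1) (p ^ 2) x.2 *
        qPochhammer (p * b * p ^ (2 * x.1)) p (2 * x.2))

lemma map_wellPoisedSum (f : R →+* S) (p b u : R) (N : ℕ) :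
    f (wellPoisedSum p b u N) = wellPoisedSum (f p) (f b) (f u) N := by
  simp [wellPoisedSum, wellPoisedTerm]

lemma map_balancedSum (f : R →+* S) (p b u : R) (N : ℕ) :
    f (balancedSum p b u N) = balancedSum (f p) (f b) (f u) N := by
  simp [balancedSum]

lemma sq_pow_choose_two_mul (p : R) (k : ℕ) : (p ^ 2) ^ k.choose 2 * p ^ k = p ^ k ^ 2 := by
  rw [← pow_mul, ← pow_add, mul_comm 2, Nat.choose_two_right,
    Nat.div_mul_cancel (Nat.even_mul_pred_self k).two_dvd]
  congr 1
  cases k with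
  | zero => rfl
  | succ k => rw [Nat.add_sub_cancel]; ring

lemma wellPoisedTerm_mul_pow {p b : R} (u : R) {k m : ℕ} (hp : IsUnit p)
    (h : p ^ (k + m) * b = -1) :
    wellPoisedTerm p b u k m * p ^ (4 * k * m + k + m) = (p ^ m - p ^ k) * b ^ (2 * (k + m)) *
      ((qPochhammer (p ^ 2 * (p ^ 2) ^ m) (p ^ 2) k *
          qPochhammer (p ^ 2 * (p ^ 2) ^ k) (p ^ 2) m) *
        (symmPochhammer u (p ^ 2 * (p ^ 2) ^ m) (p ^ 2) k *
          symmPochhammer u (p ^ 2 * (p ^ 2) ^ k) (p ^ 2) m)) := by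
  have hreflect : b ^ 2 * (p ^ 2 * (p ^ 2) ^ m) * (p ^ 2) ^ k = p ^ 2 := by
    linear_combination p ^ 2 * (p ^ (k + m) * b - 1) * h
  have hpow : ((p ^ 2) ^ k.choose 2 * p ^ k) ^ 3 * p ^ k ^ 2 * p ^ (4 * k * m) * b ^ (4 * k) = 1 :=
    calc _ = (p ^ (k + m) * b) ^ (4 * k) := by rw [sq_pow_choose_two_mul]; ring
      _ = 1 := by rw [h, pow_mul]; norm_num
  have hfactor : p ^ m * (1 + p ^ (2 * k) * b) = p ^ m - p ^ k := by
    linear_combination p ^ k * h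
  have hsign : ((-1 : R) ^ k) ^ 2 = 1 := by rw [← pow_mul, mul_comm, pow_mul]; norm_num
  rw [wellPoisedTerm, qPochhammer_reflect (hp.pow 2) hreflect,
    symmPochhammer_reflect u (hp.pow 2) hreflect, ← hfactor, neg_pow (b ^ 2)]
  linear_combination p ^ m * (1 + p ^ (2 * k) * b) * b ^ (2 * (k + m)) *
    ((qPochhammer (p ^ 2 * (p ^ 2) ^ m) (p ^ 2) k *
        qPochhammer (p ^ 2 * (p ^ 2) ^ k) (p ^ 2) m) *
      (symmPochhammer u (p ^ 2 * (p ^ 2) ^ m) (p ^ 2) k *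
        symmPochhammer u (p ^ 2 * (p ^ 2) ^ k) (p ^ 2) m)) *
    (((p ^ 2) ^ k.choose 2 * p ^ k) ^ 3 * p ^ k ^ 2 * p ^ (4 * k * m) * b ^ (4 * k) * hsign + hpow)

lemma wellPoisedTerm_add_swap {p b : R} (u : R) {k m : ℕ} (hp : IsUnit p)
    (h : p ^ (k + m) * b = -1) : wellPoisedTerm p b u k m + wellPoisedTerm p b u m k = 0 := by
  refine (hp.pow (4 * k * m + k + m)).mul_left_eq_zero.1 ?_
  have h₁ := wellPoisedTerm_mul_pow u hp h
  have h₂ := wellPoisedTerm_mul_pow u hp (add_comm k m ▸ h)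
  rw [show 4 * m * k + m + k = 4 * k * m + k + m by ring] at h₂
  linear_combination h₁ + h₂

lemma wellPoisedSum_eq_zero {p b : R} (u : R) {N : ℕ} (hp : IsUnit p) (h : p ^ N * b = -1) :
    wellPoisedSum p b u N = 0 := by
  refine sum_involution (fun x _ => x.swap) ?_ ?_ (fun x hx => ?_) (fun x _ => x.swap_swap)
  · rintro ⟨k, m⟩ hx
    exact wellPoisedTerm_add_swap u hp (mem_antidiagonal.1 hx ▸ h)
  · rintro ⟨k, m⟩ hx hne hswap
    obtain rfl : m = k := congrArg Prod.fst hswap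
    refine hne ?_
    have hfactor : 1 + p ^ (2 * m) * b = 0 := by
      rw [two_mul, mem_antidiagonal.1 hx, h, add_neg_cancel]
    simp only [wellPoisedTerm, hfactor, mul_zero, zero_mul]
  · rwa [HasAntidiagonal.mem_antidiagonal, Prod.fst_swap, Prod.snd_swap, add_comm,
      ← HasAntidiagonal.mem_antidiagonal]

theorem one_add_dvd_wellPoisedSum {p : R} (b u : R) (N : ℕ) (hp : IsUnit p) :
    1 + p ^ N * b ∣ wellPoisedSum p b u N := by
  rw [← Ideal.mem_span_singleton, ← Ideal.Quotient.eq_zero_iff_mem, map_wellPoisedSum]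
  refine wellPoisedSum_eq_zero _ (hp.map _) (eq_neg_of_add_eq_zero_right ?_)
  rw [← map_pow, ← map_mul, ← map_one (Ideal.Quotient.mk _), ← map_add,
    Ideal.Quotient.eq_zero_iff_mem]
  exact Ideal.mem_span_singleton_self _

/-- The difference of the two sides, with parameter `u` inserted and denominators cleared. The
multiplier `c` stands for `(b; p)_{2N+1} / (1 - p ^ N * b)`. -/
def clearedDifference (p b c u : R) (N : ℕ) : R :=
  c * wellPoisedSum p b u N -
    (-1) ^ N * (1 + p ^ N * b) * ((b ^ 2) ^ N * (p ^ 2) ^ N.choose 2) * balancedSum p b u N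

lemma map_clearedDifference (f : R →+* S) (p b c u : R) (N : ℕ) :
    f (clearedDifference p b c u N) = clearedDifference (f p) (f b) (f c) (f u) N := by
  simp [clearedDifference, map_wellPoisedSum, map_balancedSum]

lemma one_add_dvd_clearedDifference {p : R} (b c u : R) (N : ℕ) (hp : IsUnit p) :
    1 + p ^ N * b ∣ clearedDifference p b c u N :=
  dvd_sub ((one_add_dvd_wellPoisedSum b u N hp).mul_left c)
    (((dvd_mul_left _ _).mul_right _).mul_right _)

end ClearedSums

section Microscoping

variable {K : Type*} [Field K] {p b : K}

lemma wellPoisedSum_eq_sum_baileyAlpha (h : IsGeneric p b) (u : K) (N : ℕ) :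
    wellPoisedSum p b u N = (1 + b) * qPochhammer (p ^ 2) (p ^ 2) N * b ^ (2 * N) *
      ∑ k ∈ range (N + 1), baileyAlpha p b k * (p ^ 2 / b ^ 2) ^ k *
        (symmPochhammer u (b ^ 2) (p ^ 2) k *
          symmPochhammer u (p ^ 2 * (p ^ 2) ^ k) (p ^ 2) (N - k)) := by
  rw [wellPoisedSum, Nat.sum_antidiagonal_eq_sum_range_succ (wellPoisedTerm p b u), mul_sum]
  refine sum_congr rfl fun k hk => ?_
  obtain ⟨m, rfl⟩ := Nat.exists_eq_add_of_le (mem_range_succ_iff.1 hk)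
  have hb := h.isUnit_right.ne_zero
  have hb₁ : 1 + b ≠ 0 := by simpa using h.one_add_ne_zero 0
  have hQ := qPochhammer_ne_zero h.sq_mul_sq_pow_ne_one k
  rw [Nat.add_sub_cancel_left, wellPoisedTerm, baileyAlpha, qPochhammer_add,
    div_pow _ _ k]
  field_simp
  ring

lemma balancedSum_eq_sum_baileyBeta (h : IsGeneric p b) (u : K) (N : ℕ) :
    balancedSum p b u N = qPochhammer (p ^ 2) (p ^ 2) N * qPochhammer (p * b) p (2 * N) *
      b ^ (2 * N) * symmPochhammer u (p ^ 2) (p ^ 2) N *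
        ∑ k ∈ range (N + 1), baileyBeta p b k * (p ^ 2 / b ^ 2) ^ k *
          symmPochhammer u (b ^ 2) (p ^ 2) k := by
  rw [balancedSum, Nat.sum_antidiagonal_eq_sum_range_succ_mk, mul_sum, mul_sum]
  refine sum_congr rfl fun k hk => ?_
  obtain ⟨m, rfl⟩ := Nat.exists_eq_add_of_le (mem_range_succ_iff.1 hk)
  have hb := h.isUnit_right.ne_zero
  have hQ := qPochhammer_ne_zero h.sq_mul_sq_pow_ne_one k
  have hpb := qPochhammer_ne_zero h.mul_mul_pow_ne_one (2 * k)
  rw [Nat.add_sub_cancel_left, baileyBeta, qPochhammer_add, mul_add, qPochhammer_add (p * b),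
    div_pow _ _ k]
  field_simp
  ring

lemma sum_baileyBeta_eq_sum_baileyAlpha (h : IsGeneric p b) {N : ℕ} {c : K}
    (hc : c = (p ^ N * b) ^ 2) (hD : qPochhammer (p ^ 2 / c) (p ^ 2) N ≠ 0) :
    qPochhammer (b ^ 2 * p ^ 2) (p ^ 2) N * (symmPochhammer (c + c⁻¹) (p ^ 2) (p ^ 2) N *
        ∑ k ∈ range (N + 1), baileyBeta p b k * (p ^ 2 / b ^ 2) ^ k *
          symmPochhammer (c + c⁻¹) (b ^ 2) (p ^ 2) k) =
      qPochhammer (p ^ 2 / c) (p ^ 2) N *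
        ∑ k ∈ range (N + 1), baileyAlpha p b k * (p ^ 2 / b ^ 2) ^ k *
          (symmPochhammer (c + c⁻¹) (b ^ 2) (p ^ 2) k *
            symmPochhammer (c + c⁻¹) (p ^ 2 * (p ^ 2) ^ k) (p ^ 2) (N - k)) := by
  have hp := h.isUnit_left.ne_zero
  have hb := h.isUnit_right.ne_zero
  have hc₀ : c ≠ 0 := hc ▸ by positivity
  have hcQ : b ^ 2 * p ^ 2 * (p ^ 2) ^ N = c * p ^ 2 := by rw [hc]; ring
  have hbailey := (isBaileyPair_baileyAlpha_baileyBeta h).sum_eq (ρ := c * b ^ 2)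
    (y := b ^ 2 / c) (z := p ^ 2 / b ^ 2) (pow_ne_zero 2 hp) h.sq_mul_sq_pow_ne_one
    h.mul_sq_pow_ne_one hD (by field_simp) (by field_simp) (by rw [hc]; field_simp; ring)
  simp only [hcQ, ← symmPochhammer_add_inv hc₀] at hbailey
  rw [mul_left_comm, sum_congr rfl fun k _ => (by ring :
    baileyBeta p b k * (p ^ 2 / b ^ 2) ^ k * symmPochhammer (c + c⁻¹) (b ^ 2) (p ^ 2) k =
      symmPochhammer (c + c⁻¹) (b ^ 2) (p ^ 2) k * (p ^ 2 / b ^ 2) ^ k * baileyBeta p b k),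
    hbailey, mul_left_comm, mul_sum]
  congr 1
  refine sum_congr rfl fun k hk => ?_
  obtain ⟨m, rfl⟩ := Nat.exists_eq_add_of_le (mem_range_succ_iff.1 hk)
  rw [qPochhammer_add] at hD
  have hD' := left_ne_zero_of_mul hD
  have hcQ' : qPochhammer (c * p ^ 2) (p ^ 2) k ≠ 0 := by
    rw [← hcQ]
    exact qPochhammer_ne_zero (fun j => by
      rw [mul_assoc, ← pow_add]; exact h.mul_sq_pow_ne_one _) k
  rw [Nat.add_sub_cancel_left, symmPochhammer_add _ (p ^ 2), symmPochhammer_add_inv hc₀ (p ^ 2)]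
  field_simp

/-- This is the terminating Bailey lemma with parameters `c * b ^ 2` and
`b ^ 2 / c = (p ^ 2) ^ (-N)`. -/
lemma qPochhammer_mul_wellPoisedSum (h : IsGeneric p b) (N : ℕ) {c : K}
    (hc : c = (p ^ N * b) ^ 2) :
    qPochhammer b p (2 * N + 1) * wellPoisedSum p b (c + c⁻¹) N =
      (-1) ^ N * (1 - c) * ((b ^ 2) ^ N * (p ^ 2) ^ N.choose 2) * balancedSum p b (c + c⁻¹) N := by
  have hc₀ : c ≠ 0 := hc ▸ pow_ne_zero 2
    (mul_ne_zero (pow_ne_zero N h.isUnit_left.ne_zero) h.isUnit_right.ne_zero)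
  have ha : qPochhammer (b ^ 2) (p ^ 2) N =
      (-b ^ 2) ^ N * (p ^ 2) ^ N.choose 2 * qPochhammer (p ^ 2 / c) (p ^ 2) N :=
    qPochhammer_reflect (h.isUnit_left.pow 2) (by field_simp; rw [hc]; ring)
  have ha₀ : qPochhammer (b ^ 2) (p ^ 2) N ≠ 0 := qPochhammer_ne_zero (fun j => by
    rw [← pow_mul, mul_comm 2, pow_mul, ← mul_pow]; exact h.sq_ne_one j) N
  have hD : qPochhammer (p ^ 2 / c) (p ^ 2) N ≠ 0 := right_ne_zero_of_mul (ha ▸ ha₀)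
  have hbailey : (1 + b) * qPochhammer (b ^ 2 * p ^ 2) (p ^ 2) N * balancedSum p b (c + c⁻¹) N =
      qPochhammer (p ^ 2 / c) (p ^ 2) N * qPochhammer (p * b) p (2 * N) *
        wellPoisedSum p b (c + c⁻¹) N := by
    rw [wellPoisedSum_eq_sum_baileyAlpha h, balancedSum_eq_sum_baileyBeta h]
    linear_combination (1 + b) * qPochhammer (p ^ 2) (p ^ 2) N * qPochhammer (p * b) p (2 * N) *
      b ^ (2 * N) * sum_baileyBeta_eq_sum_baileyAlpha h hc hD
  have hshift : (1 - b ^ 2) * qPochhammer (b ^ 2 * p ^ 2) (p ^ 2) N =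
      qPochhammer (b ^ 2) (p ^ 2) N * (1 - c) := by
    rw [← qPochhammer_succ', qPochhammer_succ, hc]
    ring
  rw [ha, neg_pow] at hshift
  refine mul_left_cancel₀ hD ?_
  rw [qPochhammer_succ', mul_comm b p]
  linear_combination balancedSum p b (c + c⁻¹) N * hshift - (1 - b) * hbailey

lemma mul_sub_dvd_eval {R : Type*} [CommRing R] [IsDomain R] {G : R[X]} {a r : R} (ha : a ≠ 0)
    (hdvd : C a ∣ G) (hr : G.eval r = 0) (t : R) : a * (t - r) ∣ G.eval t := by
  obtain ⟨H, rfl⟩ := hdvd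
  rw [eval_mul, eval_C] at hr ⊢
  have hH : H.eval r = 0 := (mul_eq_zero.1 hr).resolve_left ha
  exact mul_dvd_mul_left a (by simpa [hH] using H.sub_dvd_eval_sub t r)

variable {R : Type*} [CommRing R] [IsDomain R]

lemma qPochhammer_mul_wellPoisedSum_of_isUnit {p b r : R} (h : IsGeneric p b) (N : ℕ)
    (hr : r * (p ^ N * b) ^ 2 = (p ^ N * b) ^ 4 + 1) :
    qPochhammer b p (2 * N + 1) * wellPoisedSum p b r N =
      (-1) ^ N * (1 - (p ^ N * b) ^ 2) * ((b ^ 2) ^ N * (p ^ 2) ^ N.choose 2) *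
        balancedSum p b r N := by
  let f := algebraMap R (FractionRing R)
  have hf : Function.Injective f := IsFractionRing.injective R (FractionRing R)
  have hfr : f r = (f p ^ N * f b) ^ 2 + ((f p ^ N * f b) ^ 2)⁻¹ := by
    have hf₀ := (h.map f hf).isUnit_left.ne_zero
    have hf₁ := (h.map f hf).isUnit_right.ne_zero
    have hfr := congrArg f hr
    simp only [map_mul, map_add, map_pow, map_one] at hfr
    field_simp
    linear_combination hfr
  apply hf
  simpa [map_wellPoisedSum, map_balancedSum, hfr] using
    qPochhammer_mul_wellPoisedSum (h.map f hf) N rfl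

lemma clearedDifference_eq_zero {p b c r : R} (h : IsGeneric p b) {N : ℕ}
    (hc : qPochhammer b p (2 * N + 1) = (1 - p ^ N * b) * c)
    (hr : r * (p ^ N * b) ^ 2 = (p ^ N * b) ^ 4 + 1) : clearedDifference p b c r N = 0 := by
  have hw : 1 - p ^ N * b ≠ 0 := fun h₀ =>
    h.sq_ne_one N (by linear_combination (-1 - p ^ N * b) * h₀)
  have htransform := qPochhammer_mul_wellPoisedSum_of_isUnit h N hr
  rw [hc] at htransform
  refine (mul_eq_zero.1 ?_).resolve_left hw
  rw [clearedDifference]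
  linear_combination htransform

/-- Creative microscoping: the factors `1 + w` and `u - (w ^ 2 + w ^ (-2))`, with `w = p ^ N * b`,
both divide the parametrised difference, and the latter becomes `(1 - w ^ 2) ^ 2` at `u = 2`. -/
theorem one_add_pow_three_mul_one_sub_sq_dvd {p b c : R} (h : IsGeneric p b) (N : ℕ)
    (hc : qPochhammer b p (2 * N + 1) = (1 - p ^ N * b) * c) :
    (1 + p ^ N * b) ^ 3 * (1 - p ^ N * b) ^ 2 ∣ clearedDifference p b c 2 N := by
  obtain ⟨v, hv⟩ := ((h.isUnit_left.pow N).mul h.isUnit_right).exists_right_inv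
  have hw : 1 + p ^ N * b ≠ 0 := fun h₀ =>
    h.sq_ne_one N (by linear_combination (p ^ N * b - 1) * h₀)
  have heval (t : R) :
      (clearedDifference (C p) (C b) (C c) X N).eval t = clearedDifference p b c t N := by
    simpa using map_clearedDifference (evalRingHom t) (C p) (C b) (C c) X N
  have hdvd : C (1 + p ^ N * b) ∣ clearedDifference (C p) (C b) (C c) X N := by
    simpa using one_add_dvd_clearedDifference (C b) (C c) X N (h.isUnit_left.map C)
  have hroot : (clearedDifference (C p) (C b) (C c) X N).eval ((p ^ N * b) ^ 2 + v ^ 2) = 0 := by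
    rw [heval]
    exact clearedDifference_eq_zero h hc (by linear_combination (p ^ N * b * v + 1) * hv)
  rw [← heval]
  refine dvd_trans ⟨-v ^ 2, ?_⟩ (mul_sub_dvd_eval hw hdvd hroot 2)
  generalize p ^ N * b = w at *
  linear_combination (1 + w) * (-2 - 2 * (v - w) * w + w ^ 2 * (w * v - 1)) * hv

end Microscoping

section Truncation

variable {R K : Type*} [CommRing R] [IsDomain R] [Field K]

/-- The difference of the two sides of the theorem in the variables `p = q ^ 4`, `b = q ^ s`, where
the number `N + 1` of summands is arbitrary. -/
def truncatedDifference (p b : K) (N : ℕ) : K :=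
  ∑ k ∈ range (N + 1), baileyAlpha p b k * (p ^ 2 / b ^ 2) ^ k *
      (qPochhammer (b ^ 2) (p ^ 2) k / qPochhammer (p ^ 2) (p ^ 2) k) ^ 2 -
    (-1) ^ N * ((1 - (p ^ N * b) ^ 2) / (1 - b ^ 2)) * ((b ^ 2) ^ N * (p ^ 2) ^ N.choose 2) *
      ∑ k ∈ range (N + 1),
        baileyBeta p b k * (p ^ 2 / b ^ 2) ^ k * qPochhammer (b ^ 2) (p ^ 2) k ^ 2

lemma truncatedDifference_zero {p b : K} (h : IsGeneric p b) :
    truncatedDifference p b 0 = 0 := by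
  have hplus := h.one_add_ne_zero 0
  have hsq : 1 - b ^ 2 ≠ 0 := sub_ne_zero.2 fun h₁ => h.sq_ne_one 0 (by simpa using h₁.symm)
  simp_all [truncatedDifference, baileyAlpha, baileyBeta]

lemma wellPoisedSum_two {p b : K} (h : IsGeneric p b) (N : ℕ) :
    wellPoisedSum p b 2 N = (1 + b) * qPochhammer (p ^ 2) (p ^ 2) N ^ 3 * b ^ (2 * N) *
      ∑ k ∈ range (N + 1), baileyAlpha p b k * (p ^ 2 / b ^ 2) ^ k *
        (qPochhammer (b ^ 2) (p ^ 2) k / qPochhammer (p ^ 2) (p ^ 2) k) ^ 2 := by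
  rw [wellPoisedSum_eq_sum_baileyAlpha h, mul_sum, mul_sum]
  refine sum_congr rfl fun k hk => ?_
  obtain ⟨m, rfl⟩ := Nat.exists_eq_add_of_le (mem_range_succ_iff.1 hk)
  have hQ := qPochhammer_ne_zero h.sq_mul_sq_pow_ne_one k
  rw [Nat.add_sub_cancel_left, symmPochhammer_two, symmPochhammer_two, qPochhammer_add]
  field_simp

lemma clearedDifference_two {p b c : K} (h : IsGeneric p b) {N : ℕ}
    (hc : qPochhammer b p (2 * N + 1) = (1 - p ^ N * b) * c) :
    clearedDifference p b c 2 N = (1 + b) * c * qPochhammer (p ^ 2) (p ^ 2) N ^ 3 * b ^ (2 * N) *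
      truncatedDifference p b N := by
  have hb := h.one_sub_ne_zero 0
  have hb' := h.one_add_ne_zero 0
  rw [pow_zero, one_mul] at hb hb'
  have hratio : (1 + p ^ N * b) * qPochhammer (p * b) p (2 * N) =
      (1 + b) * c * ((1 - (p ^ N * b) ^ 2) / (1 - b ^ 2)) := by
    rw [qPochhammer_succ', mul_comm b p] at hc
    rw [show 1 - b ^ 2 = (1 - b) * (1 + b) by ring]
    field_simp
    rw [mul_comm b p]
    linear_combination (1 + p ^ N * b) * hc
  rw [clearedDifference, truncatedDifference, wellPoisedSum_two h, balancedSum_eq_sum_baileyBeta h,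
    symmPochhammer_two]
  simp only [symmPochhammer_two]
  linear_combination (-(-1) ^ N * ((b ^ 2) ^ N * (p ^ 2) ^ N.choose 2) *
    qPochhammer (p ^ 2) (p ^ 2) N ^ 3 * b ^ (2 * N) * ∑ k ∈ range (N + 1),
      baileyBeta p b k * (p ^ 2 / b ^ 2) ^ k * qPochhammer (b ^ 2) (p ^ 2) k ^ 2) * hratio

theorem exists_truncatedDifference_eq {f : R →+* K} (hf : Function.Injective f) {p b c : R}
    (h : IsGeneric p b) {N : ℕ} (hc : qPochhammer b p (2 * N + 1) = (1 - p ^ N * b) * c)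
    (hc_unit : IsUnit c) (hb : IsUnit (1 + b)) (hQ : IsUnit (qPochhammer (p ^ 2) (p ^ 2) N)) :
    ∃ y, truncatedDifference (f p) (f b) N =
      f ((1 + p ^ N * b) ^ 3 * (1 - p ^ N * b) ^ 2 * y) := by
  obtain ⟨z, hz⟩ := one_add_pow_three_mul_one_sub_sq_dvd h N hc
  obtain ⟨v, hv⟩ := (((hb.mul hc_unit).mul (hQ.pow 3)).mul
    (h.isUnit_right.pow (2 * N))).exists_left_inv
  refine ⟨v * z, ?_⟩
  have hdiff := clearedDifference_two (h.map f hf) (N := N) (c := f c)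
    (by simpa using congrArg f hc)
  rw [← map_ofNat f 2, ← map_clearedDifference, hz] at hdiff
  have hfv := congrArg f hv
  simp only [map_mul, map_pow, map_add, map_sub, map_one, map_qPochhammer] at hdiff hfv ⊢
  linear_combination -truncatedDifference (f p) (f b) N * hfv - f v * hdiff

end Truncation

section Substitution

variable {K : Type*} [Field K] {x : K}

lemma sq_zpow (x : K) (s : ℤ) : (x ^ s) ^ 2 = x ^ (2 * s) := by
  rw [← zpow_natCast, ← zpow_mul, mul_comm, Nat.cast_two]

lemma sq_zpow_four (x : K) : (x ^ (4 : ℤ)) ^ 2 = x ^ (8 : ℤ) := sq_zpow x 4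

lemma div_pow_zpow (hx : x ≠ 0) (s : ℤ) (k : ℕ) :
    ((x ^ (4 : ℤ)) ^ 2 / (x ^ s) ^ 2) ^ k = x ^ (2 * (k : ℤ) * (4 - s)) := by
  rw [sq_zpow, sq_zpow, ← zpow_sub₀ hx, ← zpow_natCast, ← zpow_mul]
  congr 1
  ring

lemma baileyAlpha_zpow (hx : x ≠ 0) (s : ℤ) (k : ℕ) :
    baileyAlpha (x ^ (4 : ℤ)) (x ^ s) k * ((x ^ (4 : ℤ)) ^ 2 / (x ^ s) ^ 2) ^ k *
        (qPochhammer ((x ^ s) ^ 2) ((x ^ (4 : ℤ)) ^ 2) k /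
          qPochhammer ((x ^ (4 : ℤ)) ^ 2) ((x ^ (4 : ℤ)) ^ 2) k) ^ 2 =
      (-1) ^ k * ((1 + x ^ (8 * (k : ℤ) + s)) *
          qPochhammer (x ^ (2 * s)) (x ^ (8 : ℤ)) k ^ 3) /
        ((1 + x ^ s) * qPochhammer (x ^ (8 : ℤ)) (x ^ (8 : ℤ)) k ^ 3) *
        x ^ (4 * (k : ℤ) ^ 2 + 2 * (k : ℤ) * (4 - s)) := by
  have hlinear : (x ^ (4 : ℤ)) ^ (2 * k) * x ^ s = x ^ (8 * (k : ℤ) + s) := by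
    rw [pow_mul, sq_zpow_four, ← zpow_natCast, ← zpow_mul, ← zpow_add₀ hx]
  have hsquare : (x ^ (4 : ℤ)) ^ k ^ 2 = x ^ (4 * (k : ℤ) ^ 2) := by
    rw [← zpow_natCast, ← zpow_mul, Nat.cast_pow]
  rw [baileyAlpha, hlinear, hsquare, div_pow_zpow hx, sq_zpow_four, sq_zpow,
    zpow_add₀ hx (4 * (k : ℤ) ^ 2)]
  simp only [div_eq_mul_inv, mul_inv]
  ring

lemma baileyBeta_zpow (hx : x ≠ 0) (s : ℤ) (k : ℕ) :
    baileyBeta (x ^ (4 : ℤ)) (x ^ s) k * ((x ^ (4 : ℤ)) ^ 2 / (x ^ s) ^ 2) ^ k *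
        qPochhammer ((x ^ s) ^ 2) ((x ^ (4 : ℤ)) ^ 2) k ^ 2 =
      qPochhammer (x ^ (2 * s)) (x ^ (8 : ℤ)) k ^ 2 * qPochhammer (x ^ (4 : ℤ)) (x ^ (8 : ℤ)) k /
        (qPochhammer (x ^ (8 : ℤ)) (x ^ (8 : ℤ)) k *
          qPochhammer (x ^ (4 + s)) (x ^ (8 : ℤ)) k *
          qPochhammer (x ^ (8 + s)) (x ^ (8 : ℤ)) k) *
        x ^ (2 * (k : ℤ) * (4 - s)) := by
  have hodd : x ^ (4 : ℤ) * x ^ s = x ^ (4 + s) := (zpow_add₀ hx 4 s).symm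
  have heven : x ^ (4 + s) * x ^ (4 : ℤ) = x ^ (8 + s) := by
    rw [← hodd, zpow_add₀ hx, ← sq_zpow_four]
    ring
  rw [baileyBeta, hodd, qPochhammer_two_mul, heven, div_pow_zpow hx, sq_zpow_four, sq_zpow]
  simp only [div_eq_mul_inv, mul_inv]
  ring

lemma zpow_sub_mul_div_four (hx : x ≠ 0) {n s : ℤ} {N : ℕ} (hn : n = 4 * N + s) :
    x ^ ((n - s) * (n + s - 4) / 4) = ((x ^ s) ^ 2) ^ N * ((x ^ (4 : ℤ)) ^ 2) ^ N.choose 2 := by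
  refine mul_right_cancel₀ (pow_ne_zero N (zpow_ne_zero 4 hx)) ?_
  rw [mul_assoc, sq_pow_choose_two_mul, hn,
    show (4 * N + s - s) * (4 * N + s + s - 4) = 4 * (N * (4 * N + 2 * s - 4)) by ring,
    Int.mul_ediv_cancel_left _ (by norm_num)]
  simp only [← zpow_natCast, ← zpow_mul, ← zpow_add₀ hx]
  congr 1
  push_cast
  ring

end Substitution

section RegularAt

variable {F : Type*} [Field F]

/-- The rational functions whose reduced denominator is coprime to `P`, among which divisibility of
the numerator by `P` is a congruence. -/
def regularAt (P : F[X]) : Subring (RatFunc F) where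
  carrier := {y | IsCoprime P y.denom}
  mul_mem' {y z} hy hz :=
    (IsCoprime.mul_right hy hz).of_isCoprime_of_dvd_right (y.denom_mul_dvd z)
  one_mem' := by simp [isCoprime_one_right]
  add_mem' {y z} hy hz :=
    (IsCoprime.mul_right hy hz).of_isCoprime_of_dvd_right (y.denom_add_dvd z)
  zero_mem' := by simp [isCoprime_one_right]
  neg_mem' {y} hy := by
    have h := RatFunc.denom_mul_dvd (algebraMap F[X] (RatFunc F) (-1)) y
    rw [RatFunc.denom_algebraMap, one_mul, map_neg, map_one, neg_one_mul] at h
    exact hy.of_isCoprime_of_dvd_right h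

variable {P f : F[X]}

lemma dvd_num_algebraMap_mul (hf : P ∣ f) {y : RatFunc F} (hy : y ∈ regularAt P) :
    P ∣ (algebraMap F[X] (RatFunc F) f * y).num := by
  refine IsCoprime.dvd_of_dvd_mul_right hy ?_
  rw [(RatFunc.num_mul_eq_mul_denom_iff y.denom_ne_zero (p := f * y.num)).2 ?_]
  · exact (hf.mul_right _).mul_right _
  · rw [map_mul, mul_div_assoc, RatFunc.num_div_denom]

/-- The inclusion of the polynomials into `regularAt P`. -/
noncomputable def toRegularAt (P : F[X]) : F[X] →+* regularAt P :=
  (algebraMap F[X] (RatFunc F)).codRestrict (regularAt P) fun f => by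
    simp [regularAt, isCoprime_one_right]

lemma isUnit_toRegularAt (hf : f ≠ 0) (h : IsCoprime P f) : IsUnit (toRegularAt P f) := by
  have hf' : algebraMap F[X] (RatFunc F) f ≠ 0 := by simpa
  have hinv : (algebraMap F[X] (RatFunc F) f)⁻¹ ∈ regularAt P :=
    h.of_isCoprime_of_dvd_right (by simpa using RatFunc.denom_inv_dvd hf')
  exact IsUnit.of_mul_eq_one ⟨_, hinv⟩ (Subtype.ext (mul_inv_cancel₀ hf'))

end RegularAt

section PowersOfUnits

lemma isGeneric_zpow {R : Type*} [CommRing R] {u : Rˣ} (hu : ∀ m : ℤ, m ≠ 0 → u ^ m ≠ 1) {s : ℤ}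
    (hs : Odd s) : IsGeneric ((u ^ (4 : ℤ) : Rˣ) : R) ((u ^ s : Rˣ) : R) where
  isUnit_left := Units.isUnit _
  isUnit_right := Units.isUnit _
  pow_ne_one i hi := by
    rw [← Units.val_pow_eq_pow_val, Units.val_eq_one.ne, ← zpow_natCast, ← zpow_mul]
    exact hu _ (by lia)
  sq_ne_one i := by
    rw [← Units.val_pow_eq_pow_val, ← Units.val_mul, ← Units.val_pow_eq_pow_val,
      Units.val_eq_one.ne, ← zpow_natCast, ← zpow_natCast, ← zpow_mul, ← zpow_add, ← zpow_mul]
    exact hu _ (by grind)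

lemma isUnit_one_sub_zpow_and_one_add_zpow {R : Type*} [CommRing R] {u : Rˣ} {m : ℤ}
    (h : IsUnit (1 - (u : R) ^ (2 * m.natAbs))) :
    IsUnit (1 - ((u ^ m : Rˣ) : R)) ∧ IsUnit (1 + ((u ^ m : Rˣ) : R)) := by
  rw [← IsUnit.mul_iff]
  rw [mul_comm, pow_mul, ← Units.val_pow_eq_pow_val] at h
  obtain hm | hm : u ^ m.natAbs = u ^ m ∨ u ^ m.natAbs = (u ^ m)⁻¹ := by
    rw [← zpow_natCast, ← zpow_neg]
    obtain hm | hm := Int.natAbs_eq m <;> [left; right] <;> congr 1 <;> lia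
  · rw [hm] at h
    convert h using 1
    ring
  · rw [hm] at h
    convert ((u ^ m).isUnit.pow 2).neg.mul h using 1
    linear_combination (-1 - ((u ^ m : Rˣ) : R) * ((u ^ m)⁻¹ : Rˣ)) * (u ^ m).mul_inv

lemma not_dvd_of_modEq_four {n s : ℤ} (hn : Odd n) (hns : n ≡ s [ZMOD 4]) (hlow : -3 * n < s)
    (hhigh : s < 5 * n) (hne : s ≠ n) : ¬ n ∣ s := by
  rintro ⟨t, rfl⟩
  obtain ⟨m, rfl⟩ := hn
  obtain ⟨r, hr⟩ := hns.dvd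
  have hlt : t < 5 := by nlinarith
  have hgt : -3 < t := by nlinarith
  have ht : t ≠ 1 := by
    rintro rfl
    exact hne (mul_one _)
  interval_cases t <;> lia

lemma isUnit_qPochhammer_of_lt {R : Type*} [CommRing R] {u : R} {n N : ℕ} (hn : Odd n)
    (hN : N < n) (hunit : ∀ k, ¬ n ∣ k → IsUnit (1 - u ^ (2 * k))) :
    IsUnit (qPochhammer (u ^ 8) (u ^ 8) N) := by
  refine IsUnit.prod_iff.2 fun j hj => ?_
  have hdvd : ¬ n ∣ 4 * (j + 1) := fun h => by
    have hle := Nat.le_of_dvd j.succ_pos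
      (Nat.Coprime.dvd_of_dvd_mul_left (hn.coprime_two_right.pow_right 2 : n.Coprime 4) h)
    rw [mem_range] at hj
    lia
  rw [← pow_succ', ← pow_mul, show 8 * (j + 1) = 2 * (4 * (j + 1)) by ring]
  exact hunit _ hdvd

theorem exists_truncatedDifference_zpow_eq {R K : Type*} [CommRing R] [IsDomain R] [Field K]
    {f : R →+* K} (hf : Function.Injective f) {u : Rˣ} (hu : ∀ m : ℤ, m ≠ 0 → f u ^ m ≠ 1)
    {n N : ℕ} {s : ℤ} (hn : Odd n) (hs : (n : ℤ) = 4 * N + s) (hlow : -3 * (n : ℤ) < s)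
    (hunit : ∀ k, ¬ n ∣ k → IsUnit (1 - (u : R) ^ (2 * k))) :
    ∃ y, truncatedDifference (f u ^ (4 : ℤ)) (f u ^ s) N =
      f ((1 + (u : R) ^ n) ^ 3 * (1 - (u : R) ^ n) ^ 2 * y) := by
  have hmap (m : ℤ) : f ((u ^ m : Rˣ) : R) = f u ^ m :=
    map_zpow ((f : R →* K).comp (Units.coeHom R)) u m
  have hgeneric : IsGeneric ((u ^ (4 : ℤ) : Rˣ) : R) ((u ^ s : Rˣ) : R) :=
    isGeneric_zpow (fun m hm h => hu m hm (by rw [← hmap, h, Units.val_one, map_one]))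
      (by have : Odd (n : ℤ) := mod_cast hn; grind)
  have hpow (j : ℕ) : ((u ^ (4 : ℤ) : Rˣ) : R) ^ j * ((u ^ s : Rˣ) : R) =
      ((u ^ (4 * j + s) : Rˣ) : R) := by
    rw [← Units.val_pow_eq_pow_val, ← Units.val_mul, ← zpow_natCast, ← zpow_mul, ← zpow_add]
  have hunits (m : ℤ) (hm : (n : ℤ) ≡ m [ZMOD 4]) (hlow : -3 * n < m) (hhigh : m < 5 * n)
    (hne : m ≠ n) := isUnit_one_sub_zpow_and_one_add_zpow (u := u) (hunit m.natAbs
      (mt Int.natCast_dvd.2 (not_dvd_of_modEq_four (mod_cast hn) hm hlow hhigh hne)))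
  have hw : ((u ^ (4 : ℤ) : Rˣ) : R) ^ N * ((u ^ s : Rˣ) : R) = (u : R) ^ n := by
    rw [hpow, ← hs, zpow_natCast, Units.val_pow_eq_pow_val]
  rw [← hmap, ← hmap, ← hw]
  obtain rfl | hN := N.eq_zero_or_pos
  · exact ⟨0, by rw [truncatedDifference_zero (hgeneric.map f hf), mul_zero, map_zero]⟩
  refine exists_truncatedDifference_eq hf hgeneric
    (c := ∏ j ∈ (range (2 * N + 1)).erase N,
      (1 - ((u ^ s : Rˣ) : R) * ((u ^ (4 : ℤ) : Rˣ) : R) ^ j)) ?_ ?_ ?_ ?_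
  · rw [mul_comm _ ((u ^ s : Rˣ) : R)]
    exact (mul_prod_erase _ _ (mem_range.2 (by lia))).symm
  · refine IsUnit.prod_iff.2 fun j hj => ?_
    obtain ⟨hjN, hj⟩ := mem_erase.1 hj
    rw [mem_range] at hj
    rw [mul_comm, hpow]
    exact (hunits _ (by unfold Int.ModEq; lia) (by lia) (by lia) (by lia)).1
  · exact (hunits s (by unfold Int.ModEq; lia) hlow (by lia) (by lia)).2
  · convert isUnit_qPochhammer_of_lt hn (N := N) (by lia) hunit using 2 <;>
      exact (pow_mul (u : R) 4 2).symm

end PowersOfUnits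

section CyclotomicModulus

lemma ratFuncX_zpow_ne_one {F : Type*} [Field F] {m : ℤ} (hm : m ≠ 0) :
    (RatFunc.X : RatFunc F) ^ m ≠ 1 := by
  classical
  intro h
  exact hm (by simpa using congrArg (RatFunc.inftyValuation F) h)

/-- The modulus `Φ_n(-q) ^ 3 * Φ_n(q) ^ 2` of the congruence. -/
noncomputable def cyclotomicModulus (n : ℕ) : ℚ[X] :=
  (cyclotomic n ℚ).comp (-X) ^ 3 * cyclotomic n ℚ ^ 2

variable {n : ℕ}

lemma isCoprime_cyclotomic_X_pow_sub_one {m : ℕ} (h : ¬ n ∣ m) :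
    IsCoprime (cyclotomic n ℚ) (X ^ m - 1) := by
  have hm : 0 < m := Nat.pos_of_ne_zero fun h₀ => h (h₀ ▸ dvd_zero n)
  rw [← prod_cyclotomic_eq_X_pow_sub_one hm]
  refine IsCoprime.prod_right fun d hd => cyclotomic.isCoprime_rat ?_
  rintro rfl
  exact h (Nat.dvd_of_mem_divisors hd)

lemma isCoprime_cyclotomicModulus (hn : Odd n) {m : ℕ} (h : ¬ n ∣ m) :
    IsCoprime (cyclotomicModulus n) (X ^ (2 * m) - 1) := by
  have hcoprime : IsCoprime (cyclotomic n ℚ) (X ^ (2 * m) - 1) :=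
    isCoprime_cyclotomic_X_pow_sub_one fun hdvd =>
      h ((Nat.coprime_two_right.2 hn).dvd_of_dvd_mul_left hdvd)
  have hneg := hcoprime.map (compRingHom (-X))
  simp only [coe_compRingHom_apply, sub_comp, pow_comp, X_comp, one_comp,
    (even_two_mul m).neg_pow] at hneg
  exact hneg.pow_left.mul_left hcoprime.pow_left

lemma cyclotomicModulus_dvd (hn : Odd n) :
    cyclotomicModulus n ∣ (1 + X ^ n) ^ 3 * (1 - X ^ n) ^ 2 := by
  have hdvd : cyclotomic n ℚ ∣ 1 - X ^ n := dvd_sub_comm.1 (cyclotomic.dvd_X_pow_sub_one n ℚ)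
  have hneg := map_dvd (compRingHom (-X)) hdvd
  simp only [coe_compRingHom_apply, sub_comp, pow_comp, X_comp, one_comp, hn.neg_pow,
    sub_neg_eq_add] at hneg
  exact mul_dvd_mul (pow_dvd_pow_of_dvd hneg 3) (pow_dvd_pow_of_dvd hdvd 2)

lemma isCoprime_cyclotomicModulus_X (hn : Odd n) : IsCoprime (cyclotomicModulus n) X := by
  have hplus : IsCoprime (1 + X ^ n : ℚ[X]) (X ^ n) := ⟨1, -1, by ring⟩
  have hminus : IsCoprime (1 - X ^ n : ℚ[X]) (X ^ n) := ⟨1, 1, by ring⟩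
  exact ((hplus.pow_left.mul_left hminus.pow_left).of_isCoprime_of_dvd_left
    (cyclotomicModulus_dvd hn)).of_isCoprime_of_dvd_right (dvd_pow_self X hn.pos.ne')

theorem cyclotomicModulus_dvd_num_truncatedDifference (hn : Odd n) {s : ℤ} {N : ℕ}
    (hs : (n : ℤ) = 4 * N + s) (hlow : -3 * (n : ℤ) < s) :
    cyclotomicModulus n ∣
      (truncatedDifference (RatFunc.X ^ (4 : ℤ) : RatFunc ℚ) (RatFunc.X ^ s) N).num := by
  obtain ⟨u, hu⟩ := isUnit_toRegularAt X_ne_zero (isCoprime_cyclotomicModulus_X hn)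
  have hfu : (regularAt (cyclotomicModulus n)).subtype u = RatFunc.X := by
    rw [hu]
    exact RatFunc.algebraMap_X
  have hunit (k : ℕ) (hk : ¬ n ∣ k) :
      IsUnit (1 - (u : regularAt (cyclotomicModulus n)) ^ (2 * k)) := by
    have hk₀ : 2 * k ≠ 0 := mul_ne_zero two_ne_zero fun h₀ => hk (h₀ ▸ dvd_zero n)
    have hne : (X ^ (2 * k) - 1 : ℚ[X]) ≠ 0 := (monic_X_pow_sub_C 1 hk₀).ne_zero
    rw [← IsUnit.neg_iff, neg_sub, hu]
    simpa using isUnit_toRegularAt hne (isCoprime_cyclotomicModulus hn hk)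
  obtain ⟨y, hy⟩ := exists_truncatedDifference_zpow_eq Subtype.val_injective
    (fun m hm => hfu.symm ▸ ratFuncX_zpow_ne_one hm) hn hs hlow hunit
  rw [hfu] at hy
  rw [hy]
  convert dvd_num_algebraMap_mul (cyclotomicModulus_dvd hn) y.2
  simp only [map_mul, map_pow, map_add, map_sub, map_one, hfu, RatFunc.algebraMap_X,
    Subring.subtype_apply]

end CyclotomicModulus

lemma qInt_div_qInt {n s : ℤ} {N : ℕ} (hn : n = 4 * N + s) :
    qInt (RatFunc.X ^ (2 : ℤ)) n / qInt (RatFunc.X ^ (2 : ℤ)) s =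
      (1 - ((RatFunc.X ^ (4 : ℤ)) ^ N * RatFunc.X ^ s) ^ 2) / (1 - (RatFunc.X ^ s) ^ 2) := by
  have hX : (1 - RatFunc.X ^ (2 : ℤ) : RatFunc ℚ) ≠ 0 :=
    sub_ne_zero.2 (ratFuncX_zpow_ne_one two_ne_zero).symm
  have hpow : (RatFunc.X ^ (4 : ℤ)) ^ N * RatFunc.X ^ s = (RatFunc.X ^ n : RatFunc ℚ) := by
    rw [hn, zpow_add₀ RatFunc.X_ne_zero, zpow_mul, zpow_natCast]
  rw [hpow, sq_zpow, sq_zpow, zpow_mul, zpow_mul, qInt, qInt, div_div_div_cancel_right₀ hX]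

theorem stmt1_general (n : ℕ) (s : ℤ) (hodd : Odd n) (hns : (n : ℤ) ≡ s [ZMOD (4 : ℤ)])
    (hlow : -3 * (n : ℤ) < s) (hs : s ≤ n) :
    ((cyclotomic n ℚ).comp (-X)) ^ 3 * (cyclotomic n ℚ) ^ 2 ∣
      RatFunc.num
        ((∑ k ∈ Finset.range ((((n : ℤ) - s) / 4).toNat + 1),
            (-1 : RatFunc ℚ) ^ k *
              ((1 + RatFunc.X ^ (8 * (k : ℤ) + s)) *
                qPoch (RatFunc.X ^ (2 * s)) (RatFunc.X ^ (8 : ℤ)) k ^ 3) /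
              ((1 + RatFunc.X ^ s) *
                qPoch (RatFunc.X ^ (8 : ℤ)) (RatFunc.X ^ (8 : ℤ)) k ^ 3) *
              RatFunc.X ^ (4 * (k : ℤ) ^ 2 + 2 * (k : ℤ) * (4 - s))) -
          (-1 : RatFunc ℚ) ^ (((n : ℤ) - s) / 4).toNat *
            (qInt (RatFunc.X ^ (2 : ℤ)) (n : ℤ) / qInt (RatFunc.X ^ (2 : ℤ)) s) *
            RatFunc.X ^ (((n : ℤ) - s) * ((n : ℤ) + s - 4) / 4) *
            ∑ k ∈ Finset.range ((((n : ℤ) - s) / 4).toNat + 1),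
              qPoch (RatFunc.X ^ (2 * s)) (RatFunc.X ^ (8 : ℤ)) k ^ 2 *
                qPoch (RatFunc.X ^ (4 : ℤ)) (RatFunc.X ^ (8 : ℤ)) k /
                (qPoch (RatFunc.X ^ (8 : ℤ)) (RatFunc.X ^ (8 : ℤ)) k *
                  qPoch (RatFunc.X ^ (4 + s)) (RatFunc.X ^ (8 : ℤ)) k *
                  qPoch (RatFunc.X ^ (8 + s)) (RatFunc.X ^ (8 : ℤ)) k) *
                RatFunc.X ^ (2 * (k : ℤ) * (4 - s))) := by
  obtain ⟨N, hN⟩ : ∃ N : ℕ, (n : ℤ) = 4 * N + s :=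
    ⟨(((n : ℤ) - s) / 4).toNat, by unfold Int.ModEq at hns; lia⟩
  have hX : (RatFunc.X : RatFunc ℚ) ≠ 0 := RatFunc.X_ne_zero
  have hdvd := cyclotomicModulus_dvd_num_truncatedDifference hodd hN hlow
  simp only [truncatedDifference, baileyAlpha_zpow hX, baileyBeta_zpow hX,
    ← zpow_sub_mul_div_four hX hN, ← qInt_div_qInt hN] at hdvd
  rwa [show (((n : ℤ) - s) / 4).toNat = N by lia]

theorem stmt1 (n : ℕ) (s : ℤ) (hpos : 0 < n)
    (hs : s = 1 ∨ s = -1) (hns : (n : ℤ) ≡ s [ZMOD (4 : ℤ)]) :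
    ((cyclotomic n ℚ).comp (-X)) ^ 3 * (cyclotomic n ℚ) ^ 2 ∣
      RatFunc.num
        ((∑ k ∈ Finset.range ((((n : ℤ) - s) / 4).toNat + 1),
            (-1 : RatFunc ℚ) ^ k *
              ((1 + RatFunc.X ^ (8 * (k : ℤ) + s)) *
                qPoch (RatFunc.X ^ (2 * s)) (RatFunc.X ^ (8 : ℤ)) k ^ 3) /
              ((1 + RatFunc.X ^ s) *
                qPoch (RatFunc.X ^ (8 : ℤ)) (RatFunc.X ^ (8 : ℤ)) k ^ 3) *
              RatFunc.X ^ (4 * (k : ℤ) ^ 2 + 2 * (k : ℤ) * (4 - s))) -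
          (-1 : RatFunc ℚ) ^ (((n : ℤ) - s) / 4).toNat *
            (qInt (RatFunc.X ^ (2 : ℤ)) (n : ℤ) / qInt (RatFunc.X ^ (2 : ℤ)) s) *
            RatFunc.X ^ (((n : ℤ) - s) * ((n : ℤ) + s - 4) / 4) *
            ∑ k ∈ Finset.range ((((n : ℤ) - s) / 4).toNat + 1),
              qPoch (RatFunc.X ^ (2 * s)) (RatFunc.X ^ (8 : ℤ)) k ^ 2 *
                qPoch (RatFunc.X ^ (4 : ℤ)) (RatFunc.X ^ (8 : ℤ)) k /
                (qPoch (RatFunc.X ^ (8 : ℤ)) (RatFunc.X ^ (8 : ℤ)) k *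
                  qPoch (RatFunc.X ^ (4 + s)) (RatFunc.X ^ (8 : ℤ)) k *
                  qPoch (RatFunc.X ^ (8 + s)) (RatFunc.X ^ (8 : ℤ)) k) *
                RatFunc.X ^ (2 * (k : ℤ) * (4 - s))) := by
  have hodd : Odd n := by
    unfold Int.ModEq at hns
    grind
  exact stmt1_general n s hodd hns (by lia) (by lia)
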